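/- There exist R ≥ 0 and a function σ : ℝ → (ℕ × ℕ → ℝ) with σ(0)(6,4) = 1 and σ(0)(t) = 0 for every t ≠ (6,4), such that for every x ∈ [0, R] and every t ∈ T the function x ↦ σ(x)(t) has derivative F_t(σ(x)) at x, and moreover: g(σ(x)) < 0.99999 for every x ∈ [0, R], and Σ_{(d,c) ∈ T} (d − 1)·q_{(d,c)}(σ(R)) < 0.99999. (Numerical proposition for the case (r, p) = (6, 4): the solution of the greedy-coloring ODE stays subcritical until the branching process describing components of the remainder becomes subcritical.) -/

import Mathlib

open Finset

/-- The set of possible types when `p`-coloring the `r`-regular tree: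
pairs `(d, c)` with `d ≤ r` uncolored neighbours and `2 ≤ c ≤ p` available colors. -/
def typeSet (r p : ℕ) : Finset (ℕ × ℕ) := Finset.range (r + 1) ×ˢ Finset.Icc 2 p

/-- `q t z`: the normalized degree-biased probability of a type `t`. -/
noncomputable def q (r p : ℕ) (t : ℕ × ℕ) (z : ℕ × ℕ → ℝ) : ℝ :=
  if t ∈ typeSet r p then
    (t.1 : ℝ) * z t / ∑ s ∈ typeSet r p, (s.1 : ℝ) * z s
  else 0

/-- `g z`: the expected growth rate of cascades. -/
noncomputable def g (r p : ℕ) (z : ℕ × ℕ → ℝ) : ℝ :=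
  (2 / (p : ℝ)) * ∑ d ∈ Finset.range (r + 1), ((d : ℝ) - 1) * q r p (d, 2) z

/-- `ΔB t z`: the expected number of vertices of type `t` created along one branch of a
cascade. -/
noncomputable def ΔB (r p : ℕ) (t : ℕ × ℕ) (z : ℕ × ℕ → ℝ) : ℝ :=
  (1 / (1 - g r p z)) *
    (-(q r p t z) + (((t.2 : ℝ) + 1) / (p : ℝ)) * q r p (t.1 + 1, t.2 + 1) z
      + (((p : ℝ) - (t.2 : ℝ)) / (p : ℝ)) * q r p (t.1 + 1, t.2) z)

/-- `Δ s t z`: the expected change in the number of vertices of type `t` caused by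
activating a vertex of type `s`. -/
noncomputable def Δ (r p : ℕ) (s t : ℕ × ℕ) (z : ℕ × ℕ → ℝ) : ℝ :=
  -(if s = t then 1 else 0) + (s.1 : ℝ) * ΔB r p t z

/-- The tuning parameters `p_{(d,c)}`. -/
noncomputable def tune (s : ℕ × ℕ) : ℝ :=
  if s.1 = 1 then (2 : ℝ) ^ (-10 : ℤ) else (2 : ℝ) ^ ((2 : ℤ) - 2 * (s.1 : ℤ))

/-- The vector field of the greedy-coloring ODE, component `t`. -/
noncomputable def Fvec (r p : ℕ) (t : ℕ × ℕ) (z : ℕ × ℕ → ℝ) : ℝ :=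
  ∑ s ∈ typeSet r p, tune s * z s * Δ r p s t z


/-! ## A barrier lemma -/

lemma barrier_aux {f f' : ℝ → ℝ} {a b : ℝ}
    (hf : ∀ x ∈ Set.Icc a b, HasDerivAt f (f' x) x) (h0 : 0 ≤ f a)
    (hb : ∀ x ∈ Set.Icc a b, f x < 0 → 0 ≤ f' x) :
    ∀ x ∈ Set.Icc a b, 0 ≤ f x := by
  have key : ∀ ⦃x⦄, x ∈ Set.Icc a b → -f x ≤ 0 := by
    have hc : ContinuousOn (fun x => -f x) (Set.Icc a b) :=
      fun x hx => (hf x hx).continuousAt.neg.continuousWithinAt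
    intro x hx
    by_contra hneg
    push Not at hneg
    -- use the strict barrier `ε * (1 + (x - a))`
    have hpos : 0 < 1 + (x - a) := by linarith [hx.1]
    set ε := (-f x) / (2 * (1 + (x - a))) with hε
    have hεp : 0 < ε := by positivity
    have := image_le_of_deriv_right_lt_deriv_boundary (f := fun x => -f x)
      (f' := fun x => -f' x) (a := a) (b := b) (B := fun x => ε * (1 + (x - a)))
      (B' := fun _ => ε) hc
      (fun y hy => (hf y ⟨hy.1, hy.2.le⟩).neg.hasDerivWithinAt)
      (by simp; linarith)
      (fun y => by
        have := ((hasDerivAt_id y).sub_const a).const_add 1 |>.const_mul ε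
        simpa using this)
      (fun y hy hyy => by
        have h1 : 0 < ε * (1 + (y - a)) := mul_pos hεp (by linarith [hy.1])
        have := hb y ⟨hy.1, hy.2.le⟩ (by linarith)
        linarith) hx
    have h2 : ε * (1 + (x - a)) = -f x / 2 := by
      rw [hε]; field_simp
    simp only [h2] at this
    linarith
  intro x hx
  linarith [key hx]

/-! ## Bounded Lipschitz functions -/

/-- Bounded Lipschitz real functions on `Fin 7 → ℝ`. -/
def BLip (f : (Fin 7 → ℝ) → ℝ) : Prop :=
  ∃ K M : ℝ, 0 ≤ K ∧ 0 ≤ M ∧ (∀ x, |f x| ≤ M) ∧ ∀ x y, |f x - f y| ≤ K * dist x y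

lemma BLip.const (c : ℝ) : BLip (fun _ => c) :=
  ⟨0, |c|, le_rfl, abs_nonneg _, fun _ => le_rfl, fun x y => by simp⟩

lemma BLip.add {f h : (Fin 7 → ℝ) → ℝ} (hf : BLip f) (hh : BLip h) :
    BLip (fun x => f x + h x) := by
  obtain ⟨K, M, hK, hM, h1, h2⟩ := hf
  obtain ⟨K', M', hK', hM', h1', h2'⟩ := hh
  refine ⟨K + K', M + M', by positivity, by positivity, fun x => ?_, fun x y => ?_⟩
  · exact (abs_add_le _ _).trans (add_le_add (h1 x) (h1' x))
  · have : f x + h x - (f y + h y) = (f x - f y) + (h x - h y) := by ring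
    rw [this, add_mul]
    exact (abs_add_le _ _).trans (add_le_add (h2 x y) (h2' x y))

lemma BLip.mul {f h : (Fin 7 → ℝ) → ℝ} (hf : BLip f) (hh : BLip h) :
    BLip (fun x => f x * h x) := by
  obtain ⟨K, M, hK, hM, h1, h2⟩ := hf
  obtain ⟨K', M', hK', hM', h1', h2'⟩ := hh
  refine ⟨M * K' + K * M', M * M', by positivity, by positivity, fun x => ?_, fun x y => ?_⟩
  · rw [abs_mul]
    exact mul_le_mul (h1 x) (h1' x) (abs_nonneg _) hM
  · have : f x * h x - f y * h y = f x * (h x - h y) + (f x - f y) * h y := by ring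
    rw [this]
    refine (abs_add_le _ _).trans ?_
    rw [abs_mul, abs_mul]
    have e1 : |f x| * |h x - h y| ≤ M * (K' * dist x y) :=
      mul_le_mul (h1 x) (h2' x y) (abs_nonneg _) hM
    have e2 : |f x - f y| * |h y| ≤ (K * dist x y) * M' :=
      mul_le_mul (h2 x y) (h1' y) (abs_nonneg _) (by positivity)
    calc _ ≤ M * (K' * dist x y) + (K * dist x y) * M' := add_le_add e1 e2
      _ = _ := by ring

lemma BLip.bmax {f h : (Fin 7 → ℝ) → ℝ} (hf : BLip f) (hh : BLip h) :
    BLip (fun x => max (f x) (h x)) := by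
  obtain ⟨K, M, hK, hM, h1, h2⟩ := hf
  obtain ⟨K', M', hK', hM', h1', h2'⟩ := hh
  refine ⟨K + K', M + M', by positivity, by positivity, fun x => ?_, fun x y => ?_⟩
  · refine abs_max_le_max_abs_abs.trans (max_le ?_ ?_)
    · linarith [h1 x]
    · linarith [h1' x]
  · refine (abs_max_sub_max_le_max _ _ _ _).trans (max_le ?_ ?_)
    · refine (h2 x y).trans ?_
      gcongr; linarith
    · refine (h2' x y).trans ?_
      gcongr; linarith

lemma BLip.one_div {f : (Fin 7 → ℝ) → ℝ} (hf : BLip f) {η : ℝ} (hη : 0 < η)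
    (hfη : ∀ x, η ≤ f x) : BLip (fun x => 1 / f x) := by
  obtain ⟨K, M, hK, hM, h1, h2⟩ := hf
  refine ⟨K / (η * η), 1 / η, by positivity, by positivity, fun x => ?_, fun x y => ?_⟩
  · have := hfη x
    have hp : 0 < f x := by linarith
    rw [abs_of_pos (by positivity)]
    exact one_div_le_one_div_of_le hη this
  · have hx := hfη x
    have hy := hfη y
    have px : 0 < f x := by linarith
    have py : 0 < f y := by linarith
    have : 1 / f x - 1 / f y = (f y - f x) / (f x * f y) := by field_simp
    rw [this, abs_div, abs_of_pos (mul_pos px py), abs_sub_comm, div_mul_eq_mul_div]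
    exact div_le_div₀ (by positivity) (h2 x y) (by positivity)
      (mul_le_mul hx hy hη.le px.le)

/-- Truncation to the unit interval. -/
noncomputable def clp (x : ℝ) : ℝ := max 0 (min 1 x)

lemma BLip.trunc (i : Fin 7) : BLip (fun y => clp (y i)) := by
  refine ⟨1, 1, zero_le_one, zero_le_one, fun x => ?_, fun x y => ?_⟩
  · unfold clp
    rw [abs_of_nonneg (le_max_left _ _)]
    exact max_le zero_le_one (min_le_left _ _)
  · unfold clp
    have h1 : |max 0 (min 1 (x i)) - max 0 (min 1 (y i))| ≤ |min 1 (x i) - min 1 (y i)| := by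
      rw [max_comm 0, max_comm 0]; exact abs_max_sub_max_le_abs _ _ _
    have h2 := abs_min_sub_min_le_max 1 (x i) 1 (y i)
    have h3 : max |(1:ℝ) - 1| |x i - y i| = |x i - y i| := by simp
    rw [h3] at h2
    have h4 : |x i - y i| ≤ dist x y := by
      rw [← Real.dist_eq]; exact dist_le_pi_dist x y i
    linarith

/-! ## The truncated, reduced system -/

noncomputable def Az (z : Fin 7 → ℝ) : ℝ :=
  23/131072 * z 1 + 11/64 * z 2 + 15/128 * z 3 + 1/16 * z 4 + 5/256 * z 5 + 3/512 * z 6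

noncomputable def Dz (z : Fin 7 → ℝ) : ℝ :=
  23/128 * z 1 + 11/16 * z 2 + 15/8 * z 3 + 4 * z 4 + 5 * z 5 + 6 * z 6

noncomputable def Gz (z : Fin 7 → ℝ) : ℝ :=
  23/128 * z 1 + 23/64 * z 2 + 3/16 * z 3 + (-1/2) * z 4 + 5 * z 5 + 6 * z 6

noncomputable def rhoz (η : ℝ) (z : Fin 7 → ℝ) : ℝ :=
  Az z * (1 / max (max (Gz z) (1/1000 * Dz z)) η)

noncomputable def vfz (η : ℝ) (z : Fin 7 → ℝ) : Fin 7 → ℝ :=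
  ![(-4) * z 0 + rhoz η z * z 1,
    (-1/1024) * z 1 + rhoz η z * ((-1) * z 1 + 2 * z 2),
    (-1/4) * z 2 + rhoz η z * ((-2) * z 2 + 3 * z 3),
    (-1/16) * z 3 + rhoz η z * ((-3) * z 3 + 4 * z 4),
    (-1/64) * z 4 + rhoz η z * ((-4) * z 4 + 5 * z 5),
    (-1/256) * z 5 + rhoz η z * ((-5) * z 5 + 6 * z 6),
    (-1/1024) * z 6 + rhoz η z * ((-6) * z 6)]

lemma BLip_comp {η : ℝ} (hη : 0 < η) (i : Fin 7) :
    BLip (fun y => vfz η (fun j => clp (y j)) i) := by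
  have hcm : ∀ (c : ℝ) (j : Fin 7), BLip (fun y => c * clp (y j)) :=
    fun c j => (BLip.const c).mul (BLip.trunc j)
  have hA : BLip (fun y => Az (fun j => clp (y j))) :=
    (((((hcm _ 1).add (hcm _ 2)).add (hcm _ 3)).add (hcm _ 4)).add (hcm _ 5)).add (hcm _ 6)
  have hD : BLip (fun y => Dz (fun j => clp (y j))) :=
    (((((hcm _ 1).add (hcm _ 2)).add (hcm _ 3)).add (hcm _ 4)).add (hcm _ 5)).add (hcm _ 6)
  have hG : BLip (fun y => Gz (fun j => clp (y j))) :=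
    (((((hcm _ 1).add (hcm _ 2)).add (hcm _ 3)).add (hcm _ 4)).add (hcm _ 5)).add (hcm _ 6)
  have hr : BLip (fun y => rhoz η (fun j => clp (y j))) :=
    hA.mul (BLip.one_div ((hG.bmax ((BLip.const _).mul hD)).bmax (BLip.const η)) hη
      (fun x => le_max_right _ _))
  fin_cases i
  · exact (hcm _ 0).add (hr.mul (BLip.trunc 1))
  · exact (hcm _ 1).add (hr.mul ((hcm _ 1).add (hcm _ 2)))
  · exact (hcm _ 2).add (hr.mul ((hcm _ 2).add (hcm _ 3)))
  · exact (hcm _ 3).add (hr.mul ((hcm _ 3).add (hcm _ 4)))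
  · exact (hcm _ 4).add (hr.mul ((hcm _ 4).add (hcm _ 5)))
  · exact (hcm _ 5).add (hr.mul ((hcm _ 5).add (hcm _ 6)))
  · exact (hcm _ 6).add (hr.mul (hcm _ 6))

lemma exists_truncated {η T : ℝ} (hη : 0 < η) (hT : 0 ≤ T) :
    ∃ y : ℝ → Fin 7 → ℝ, y 0 = ![0, 0, 0, 0, 0, 0, 1] ∧
      ∀ x ∈ Set.Icc 0 T, ∀ i,
        HasDerivAt (fun x => y x i) (vfz η (fun j => clp (y x j)) i) x := by
  choose K M hK hM h1 h2 using fun i => BLip_comp hη i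
  set KK := ∑ i, K i with hKK
  set MM := ∑ i, M i with hMM
  have hKi : ∀ i, K i ≤ KK := fun i =>
    Finset.single_le_sum (f := K) (fun j _ => hK j) (Finset.mem_univ i)
  have hMi : ∀ i, M i ≤ MM := fun i =>
    Finset.single_le_sum (f := M) (fun j _ => hM j) (Finset.mem_univ i)
  have hK0 : 0 ≤ KK := Finset.sum_nonneg fun i _ => hK i
  have hM0 : 0 ≤ MM := Finset.sum_nonneg fun i _ => hM i
  have ht : (0:ℝ) ∈ Set.Icc (-1) (T + 1) := ⟨by linarith, by linarith⟩
  have hPL : IsPicardLindelof (fun _ (y : Fin 7 → ℝ) => vfz η (fun j => clp (y j)))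
      (⟨0, ht⟩ : Set.Icc (-1:ℝ) (T+1)) (![0, 0, 0, 0, 0, 0, 1] : Fin 7 → ℝ)
      (Real.toNNReal (MM * (T + 1))) 0 (Real.toNNReal MM) (Real.toNNReal KK) := by
    have hMT : 0 ≤ MM * (T + 1) := by positivity
    refine IsPicardLindelof.of_time_independent ?_ ?_ ?_
    · intro x _
      rw [Real.coe_toNNReal _ hM0, pi_norm_le_iff_of_nonneg hM0]
      intro i
      exact (h1 i x).trans (hMi i)
    · refine (LipschitzWith.of_dist_le_mul fun x y => ?_).lipschitzOnWith
      rw [Real.coe_toNNReal _ hK0, dist_pi_le_iff (by positivity)]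
      intro i
      rw [Real.dist_eq]
      exact (h2 i x y).trans (mul_le_mul_of_nonneg_right (hKi i) dist_nonneg)
    · have : max (T + 1 - 0) (0 - (-1)) = T + 1 := by
        rw [max_eq_left] <;> linarith
      rw [Real.coe_toNNReal _ hM0, Real.coe_toNNReal _ hMT]
      simp only [this]
      simp
  obtain ⟨y, hy0, hy⟩ := hPL.exists_eq_forall_mem_Icc_hasDerivWithinAt₀
  refine ⟨y, hy0, fun x hx => ?_⟩
  have := (hy x ⟨by linarith [hx.1], by linarith [hx.2]⟩).hasDerivAt
    (Icc_mem_nhds (by linarith [hx.1]) (by linarith [hx.2]))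
  exact hasDerivAt_pi.1 this

lemma clp_nonneg (x : ℝ) : 0 ≤ clp x := le_max_left _ _

lemma clp_of_nonpos {x : ℝ} (h : x ≤ 0) : clp x = 0 := by
  unfold clp; rw [max_eq_left]; exact (min_le_right _ _).trans h

lemma clp_of_mem {x : ℝ} (h : 0 ≤ x) (h1 : x ≤ 1) : clp x = x := by
  unfold clp; rw [min_eq_right h1, max_eq_right h]

lemma Az_nonneg {z : Fin 7 → ℝ} (hz : ∀ i, 0 ≤ z i) : 0 ≤ Az z := by
  unfold Az
  linarith [hz 1, hz 2, hz 3, hz 4, hz 5, hz 6]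

lemma rhoz_nonneg {η : ℝ} (hη : 0 < η) {z : Fin 7 → ℝ} (hz : ∀ i, 0 ≤ z i) : 0 ≤ rhoz η z := by
  unfold rhoz
  have h1 : 0 < max (max (Gz z) (1/1000 * Dz z)) η := lt_max_of_lt_right hη
  exact mul_nonneg (Az_nonneg hz) (by positivity)

lemma rhoz_mul {η : ℝ} (hη : 0 < η) (z : Fin 7 → ℝ) :
    rhoz η z * max (max (Gz z) (1/1000 * Dz z)) η = Az z := by
  have h1 : 0 < max (max (Gz z) (1/1000 * Dz z)) η := lt_max_of_lt_right hη
  unfold rhoz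
  field_simp

lemma rhoz_le {η : ℝ} (hη : 0 < η) {z : Fin 7 → ℝ} (hz : ∀ i, 0 ≤ z i) : rhoz η z ≤ 250 := by
  have h1 : 0 < max (max (Gz z) (1/1000 * Dz z)) η := lt_max_of_lt_right hη
  have h2 := rhoz_mul hη z
  have h3 : 1/1000 * Dz z ≤ max (max (Gz z) (1/1000 * Dz z)) η :=
    (le_max_right _ _).trans (le_max_left _ _)
  have h4 : Az z ≤ 1/4 * Dz z := by
    unfold Az Dz
    linarith [hz 1, hz 2, hz 3, hz 4, hz 5, hz 6]
  by_contra hc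
  push Not at hc
  have := mul_lt_mul_of_pos_right hc h1
  linarith

lemma le_rhoz {η : ℝ} (hη : 0 < η) {z : Fin 7 → ℝ} (hz : ∀ i, 0 ≤ z i)
    (hD : η ≤ Dz z) : 1/1024 ≤ rhoz η z := by
  have h1 : 0 < max (max (Gz z) (1/1000 * Dz z)) η := lt_max_of_lt_right hη
  have h2 := rhoz_mul hη z
  have h3 : max (max (Gz z) (1/1000 * Dz z)) η ≤ Dz z := by
    refine max_le (max_le ?_ ?_) hD
    · unfold Gz Dz
      linarith [hz 1, hz 2, hz 3, hz 4, hz 5, hz 6]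
    · linarith
  have h4 : Dz z ≤ 1024 * Az z := by
    unfold Az Dz
    linarith [hz 1, hz 2, hz 3, hz 4, hz 5, hz 6]
  by_contra hc
  push Not at hc
  have := mul_lt_mul_of_pos_right hc h1
  linarith

section comps
variable (η : ℝ) (z : Fin 7 → ℝ)
lemma vfz0 : vfz η z 0 = (-4) * z 0 + rhoz η z * z 1 := rfl
lemma vfz1 : vfz η z 1 = (-1/1024) * z 1 + rhoz η z * ((-1) * z 1 + 2 * z 2) := rfl
lemma vfz2 : vfz η z 2 = (-1/4) * z 2 + rhoz η z * ((-2) * z 2 + 3 * z 3) := rfl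
lemma vfz3 : vfz η z 3 = (-1/16) * z 3 + rhoz η z * ((-3) * z 3 + 4 * z 4) := rfl
lemma vfz4 : vfz η z 4 = (-1/64) * z 4 + rhoz η z * ((-4) * z 4 + 5 * z 5) := rfl
lemma vfz5 : vfz η z 5 = (-1/256) * z 5 + rhoz η z * ((-5) * z 5 + 6 * z 6) := rfl
lemma vfz6 : vfz η z 6 = (-1/1024) * z 6 + rhoz η z * ((-6) * z 6) := rfl
end comps

/-- At a zero coordinate, the field points inwards. -/
lemma vfz_inward {η : ℝ} (hη : 0 < η) {z : Fin 7 → ℝ} (hz : ∀ i, 0 ≤ z i) (i : Fin 7)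
    (hi : z i = 0) : 0 ≤ vfz η z i := by
  have hr := rhoz_nonneg hη hz
  have hm : ∀ j, 0 ≤ rhoz η z * z j := fun j => mul_nonneg hr (hz j)
  have e1 := hm 1
  have e2 := hm 2
  have e3 := hm 3
  have e4 := hm 4
  have e5 := hm 5
  have e6 := hm 6
  fin_cases i
  · have hi : z 0 = 0 := hi
    change 0 ≤ vfz η z 0
    rw [vfz0, hi]; linarith
  · have hi : z 1 = 0 := hi
    change 0 ≤ vfz η z 1
    rw [vfz1, hi]; linarith
  · have hi : z 2 = 0 := hi
    change 0 ≤ vfz η z 2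
    rw [vfz2, hi]; linarith
  · have hi : z 3 = 0 := hi
    change 0 ≤ vfz η z 3
    rw [vfz3, hi]; linarith
  · have hi : z 4 = 0 := hi
    change 0 ≤ vfz η z 4
    rw [vfz4, hi]; linarith
  · have hi : z 5 = 0 := hi
    change 0 ≤ vfz η z 5
    rw [vfz5, hi]; linarith
  · have hi : z 6 = 0 := hi
    change 0 ≤ vfz η z 6
    rw [vfz6, hi]; linarith

/-- The solution of the truncated system solves the system truncated only in `η`. -/
lemma exists_sol {η T : ℝ} (hη : 0 < η) (hT : 0 ≤ T) :
    ∃ y : ℝ → Fin 7 → ℝ, y 0 = ![0, 0, 0, 0, 0, 0, 1] ∧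
      (∀ x ∈ Set.Icc 0 T, ∀ i, 0 ≤ y x i) ∧ (∀ x ∈ Set.Icc 0 T, ∀ i, y x i ≤ 1) ∧
      ∀ x ∈ Set.Icc 0 T, ∀ i, HasDerivAt (fun x => y x i) (vfz η (y x) i) x := by
  obtain ⟨y, hy0, hy⟩ := exists_truncated hη hT
  have hnn : ∀ i, ∀ x ∈ Set.Icc 0 T, 0 ≤ y x i := by
    intro i
    refine barrier_aux (fun x hx => hy x hx i) ?_ ?_
    · rw [hy0]
      fin_cases i <;> simp
    · intro x hx hneg
      exact vfz_inward hη (fun j => clp_nonneg _) i (clp_of_nonpos hneg.le)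
  have hsum : ∀ x ∈ Set.Icc 0 T,
      0 ≤ 1 - (y x 0 + y x 1 + y x 2 + y x 3 + y x 4 + y x 5 + y x 6) := by
    refine barrier_aux (fun x hx => ((((((((hy x hx 0).add (hy x hx 1)).add (hy x hx 2)).add
      (hy x hx 3)).add (hy x hx 4)).add (hy x hx 5)).add (hy x hx 6)).const_sub 1)) ?_ ?_
    · rw [hy0]
      simp [Fin.isValue]
    · intro x hx _
      simp only [vfz0, vfz1, vfz2, vfz3, vfz4, vfz5, vfz6]
      have := fun j => clp_nonneg (y x j)
      linarith [this 0, this 1, this 2, this 3, this 4, this 5, this 6]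
  have hle : ∀ x ∈ Set.Icc 0 T, ∀ i, y x i ≤ 1 := by
    intro x hx i
    have h := hsum x hx
    have h0 := hnn 0 x hx
    have h1 := hnn 1 x hx
    have h2 := hnn 2 x hx
    have h3 := hnn 3 x hx
    have h4 := hnn 4 x hx
    have h5 := hnn 5 x hx
    have h6 := hnn 6 x hx
    fin_cases i <;> simp only [Fin.zero_eta, Fin.mk_one, Fin.reduceFinMk] <;> linarith
  refine ⟨y, hy0, fun x hx i => hnn i x hx, hle, fun x hx i => ?_⟩
  have : (fun j => clp (y x j)) = y x :=
    funext fun j => clp_of_mem (hnn j x hx) (hle x hx j)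
  have h := hy x hx i
  rwa [this] at h

/-- One step of the chain of lower bounds near `0`. -/
lemma lower_step {u v r : ℝ → ℝ} {a e α : ℝ} {k : ℕ} (hk : k ≤ 5) (hα : 0 ≤ α)
    (he : 1 ≤ e) (ha : ∀ x ∈ Set.Icc (0:ℝ) 1, a + e * r x ≤ 1600)
    (hu : ∀ x ∈ Set.Icc (0:ℝ) 1,
      HasDerivAt u (-a * u x + r x * ((-e) * u x + (e + 1) * v x)) x)
    (hu0 : u 0 = 0) (hup : ∀ x ∈ Set.Icc (0:ℝ) 1, 0 ≤ u x)
    (hr : ∀ x ∈ Set.Icc (0:ℝ) 1, 1/1024 ≤ r x)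
    (hv : ∀ x ∈ Set.Icc (0:ℝ) 1, α * x ^ k ≤ v x) :
    ∀ x ∈ Set.Icc (0:ℝ) 1, (α / 2000000) * x ^ (k + 1) ≤ u x := by
  have := barrier_aux (f := fun x => u x - (α / 2000000) * x ^ (k + 1)) (a := 0) (b := 1)
    (fun x hx => (hu x hx).sub ((hasDerivAt_pow (k + 1) x).const_mul _)) (by simp [hu0]) ?_
  · intro x hx
    linarith [this x hx]
  · intro x hx hneg
    have h1 := hup x hx
    have h2 := hr x hx
    have h3 := hv x hx
    have h4 := ha x hx
    have hx0 : 0 ≤ x := hx.1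
    have hxk : 0 ≤ x ^ k := by positivity
    have hpw : x ^ (k + 1) ≤ x ^ k := pow_le_pow_of_le_one hx.1 hx.2 (Nat.le_succ k)
    set P := α * x ^ k with hP
    have hP0 : 0 ≤ P := by positivity
    have hu1 : u x ≤ P / 2000000 := by
      have : α / 2000000 * x ^ (k + 1) ≤ α / 2000000 * x ^ k := by gcongr
      have e : α / 2000000 * x ^ k = P / 2000000 := by rw [hP]; ring
      linarith
    have b1 : (a + e * r x) * u x ≤ 1600 * (P / 2000000) := by
      calc (a + e * r x) * u x ≤ 1600 * u x := by gcongr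
        _ ≤ _ := by gcongr
    have b2 : 1/1024 * P * 2 ≤ r x * ((e + 1) * v x) := by
      calc 1/1024 * P * 2 = 1/1024 * (2 * P) := by ring
        _ ≤ r x * ((e + 1) * v x) := by
          refine mul_le_mul h2 ?_ (by positivity) (by linarith)
          exact mul_le_mul (by linarith) h3 hP0 (by linarith)
    have b3 : α / 2000000 * (((k + 1 : ℕ) : ℝ) * x ^ (k + 1 - 1)) ≤ 6 * (P / 2000000) := by
      rw [Nat.add_sub_cancel]
      have hk6 : ((k + 1 : ℕ) : ℝ) ≤ 6 := by exact_mod_cast (by omega : k + 1 ≤ 6)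
      calc α / 2000000 * (((k + 1 : ℕ) : ℝ) * x ^ k)
          = ((k + 1 : ℕ) : ℝ) * (P / 2000000) := by rw [hP]; ring
        _ ≤ _ := by gcongr
    have e1 : -a * u x + r x * ((-e) * u x + (e + 1) * v x)
        = -((a + e * r x) * u x) + r x * ((e + 1) * v x) := by ring
    rw [e1]
    linarith

/-- Uniform lower bound for `y 1 1`. -/
noncomputable def alow : ℝ := Real.exp (-1501) / 2000000 ^ 5

lemma alow_pos : 0 < alow := by unfold alow; positivity

lemma alow_le : alow ≤ 1 := by
  unfold alow
  have h : Real.exp (-1501) ≤ 1 := Real.exp_le_one_iff.2 (by norm_num)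
  have h2 : (0:ℝ) < 2000000 ^ 5 := by positivity
  rw [div_le_one h2]
  linarith [show (1:ℝ) ≤ 2000000 ^ 5 by norm_num]

lemma six_lower {η T : ℝ} (hη : 0 < η) {y : ℝ → Fin 7 → ℝ}
    (hy0 : y 0 = ![0, 0, 0, 0, 0, 0, 1])
    (hnn : ∀ x ∈ Set.Icc 0 T, ∀ i, 0 ≤ y x i)
    (hy : ∀ x ∈ Set.Icc 0 T, ∀ i, HasDerivAt (fun x => y x i) (vfz η (y x) i) x) :
    ∀ x ∈ Set.Icc 0 T, Real.exp (-1501 * x) ≤ y x 6 := by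
  have := barrier_aux (f := fun x => y x 6 - Real.exp (-1501 * x)) (a := 0) (b := T)
    (fun x hx => (hy x hx 6).sub (((hasDerivAt_id x).const_mul (-1501)).exp)) (by simp [hy0]) ?_
  · intro x hx
    linarith [this x hx]
  · intro x hx hneg
    have h1 := rhoz_le hη (hnn x hx)
    have h6 := hnn x hx 6
    have h2 : rhoz η (y x) * y x 6 ≤ 250 * y x 6 := by gcongr
    rw [vfz6]
    simp only [id, mul_one]
    have he := Real.exp_pos (-1501 * x)
    linarith

lemma one_lower {η T : ℝ} (hη : 0 < η) (hT : 1 ≤ T) {y : ℝ → Fin 7 → ℝ}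
    (hy0 : y 0 = ![0, 0, 0, 0, 0, 0, 1])
    (hnn : ∀ x ∈ Set.Icc 0 T, ∀ i, 0 ≤ y x i)
    (hy : ∀ x ∈ Set.Icc 0 T, ∀ i, HasDerivAt (fun x => y x i) (vfz η (y x) i) x)
    (hr : ∀ x ∈ Set.Icc 0 T, 1/1024 ≤ rhoz η (y x)) :
    alow ≤ y 1 1 := by
  have hsub : ∀ x ∈ Set.Icc (0:ℝ) 1, x ∈ Set.Icc 0 T := fun x hx => ⟨hx.1, hx.2.trans hT⟩
  have h6 : ∀ x ∈ Set.Icc (0:ℝ) 1, Real.exp (-1501) * x ^ 0 ≤ y x 6 := by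
    intro x hx
    refine le_trans ?_ (six_lower hη hy0 hnn hy x (hsub x hx))
    rw [pow_zero, mul_one]
    exact Real.exp_le_exp.2 (by linarith [hx.2])
  have hR : ∀ x ∈ Set.Icc (0:ℝ) 1, rhoz η (y x) ≤ 250 := fun x hx => rhoz_le hη (hnn x (hsub x hx))
  have h5 := lower_step (u := fun x => y x 5) (v := fun x => y x 6) (r := fun x => rhoz η (y x))
    (a := 1/256) (e := 5) (by norm_num) (Real.exp_pos _).le (by norm_num)
    (fun x hx => by linarith [hR x hx])
    (fun x hx => by
      have := hy x (hsub x hx) 5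
      rw [vfz5] at this
      convert this using 1; ring) (by simp [hy0]) (fun x hx => hnn x (hsub x hx) 5)
    (fun x hx => hr x (hsub x hx)) h6
  have h4 := lower_step (u := fun x => y x 4) (v := fun x => y x 5) (r := fun x => rhoz η (y x))
    (a := 1/64) (e := 4) (by norm_num) (by positivity) (by norm_num)
    (fun x hx => by linarith [hR x hx])
    (fun x hx => by
      have := hy x (hsub x hx) 4
      rw [vfz4] at this
      convert this using 1; ring) (by simp [hy0]) (fun x hx => hnn x (hsub x hx) 4)
    (fun x hx => hr x (hsub x hx)) h5
  have h3 := lower_step (u := fun x => y x 3) (v := fun x => y x 4) (r := fun x => rhoz η (y x))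
    (a := 1/16) (e := 3) (by norm_num) (by positivity) (by norm_num)
    (fun x hx => by linarith [hR x hx])
    (fun x hx => by
      have := hy x (hsub x hx) 3
      rw [vfz3] at this
      convert this using 1; ring) (by simp [hy0]) (fun x hx => hnn x (hsub x hx) 3)
    (fun x hx => hr x (hsub x hx)) h4
  have h2 := lower_step (u := fun x => y x 2) (v := fun x => y x 3) (r := fun x => rhoz η (y x))
    (a := 1/4) (e := 2) (by norm_num) (by positivity) (by norm_num)
    (fun x hx => by linarith [hR x hx])
    (fun x hx => by
      have := hy x (hsub x hx) 2
      rw [vfz2] at this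
      convert this using 1; ring) (by simp [hy0]) (fun x hx => hnn x (hsub x hx) 2)
    (fun x hx => hr x (hsub x hx)) h3
  have h1 := lower_step (u := fun x => y x 1) (v := fun x => y x 2) (r := fun x => rhoz η (y x))
    (a := 1/1024) (e := 1) (by norm_num) (by positivity) (by norm_num)
    (fun x hx => by linarith [hR x hx])
    (fun x hx => by
      have := hy x (hsub x hx) 1
      rw [vfz1] at this
      convert this using 1; ring) (by simp [hy0]) (fun x hx => hnn x (hsub x hx) 1)
    (fun x hx => hr x (hsub x hx)) h2
  have := h1 1 ⟨zero_le_one, le_rfl⟩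
  refine le_trans (le_of_eq ?_) this
  unfold alow
  ring

/-- The barrier `y 4 ≤ 20 * y 3 + 5 * y 5`. -/
lemma barrier_one {η T : ℝ} {y : ℝ → Fin 7 → ℝ}
    (hy0 : y 0 = ![0, 0, 0, 0, 0, 0, 1])
    (hnn : ∀ x ∈ Set.Icc 0 T, ∀ i, 0 ≤ y x i)
    (hy : ∀ x ∈ Set.Icc 0 T, ∀ i, HasDerivAt (fun x => y x i) (vfz η (y x) i) x)
    (hr : ∀ x ∈ Set.Icc 0 T, 1/1024 ≤ rhoz η (y x)) :
    ∀ x ∈ Set.Icc 0 T, 0 ≤ y x 3 - 1/20 * y x 4 + 1/4 * y x 5 := by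
  refine barrier_aux (fun x hx => ((hy x hx 3).sub ((hy x hx 4).const_mul (1/20))).add
    ((hy x hx 5).const_mul (1/4))) (by simp [hy0]) ?_
  intro x hx hneg
  have n := hnn x hx
  have h := hr x hx
  rw [vfz3, vfz4, vfz5]
  set r := rhoz η (y x)
  have n3 := n 3
  have n4 := n 4
  have n5 := n 5
  have n6 := n 6
  have k1 : 39/10 * y x 4 ≤ (-3) * y x 3 + 4 * y x 4 - 1/20 * ((-4) * y x 4 + 5 * y x 5)
      + 1/4 * ((-5) * y x 5 + 6 * y x 6) := by linarith
  have k2 : 1/1024 * (39/10 * y x 4) ≤ r * ((-3) * y x 3 + 4 * y x 4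
      - 1/20 * ((-4) * y x 4 + 5 * y x 5) + 1/4 * ((-5) * y x 5 + 6 * y x 6)) :=
    mul_le_mul h k1 (by positivity) (by linarith)
  linarith

/-- The subcriticality barrier. -/
lemma barrier_two {η T : ℝ} (hη : 0 < η) {y : ℝ → Fin 7 → ℝ}
    (hy0 : y 0 = ![0, 0, 0, 0, 0, 0, 1])
    (hnn : ∀ x ∈ Set.Icc 0 T, ∀ i, 0 ≤ y x i)
    (hy : ∀ x ∈ Set.Icc 0 T, ∀ i, HasDerivAt (fun x => y x i) (vfz η (y x) i) x)
    (hr : ∀ x ∈ Set.Icc 0 T, 1/1024 ≤ rhoz η (y x))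
    (hD : ∀ x ∈ Set.Icc 0 T, η ≤ 1/1000 * Dz (y x)) :
    ∀ x ∈ Set.Icc 0 T, 0 ≤ Gz (y x) - 1/1000 * Dz (y x) := by
  have d := fun (c : ℝ) (i : Fin 7) x (hx : x ∈ Set.Icc 0 T) => (hy x hx i).const_mul c
  refine barrier_aux (fun x hx => ((((((d _ 1 x hx).add (d _ 2 x hx)).add (d _ 3 x hx)).add
    (d _ 4 x hx)).add (d _ 5 x hx)).add (d _ 6 x hx)).sub (((((((d _ 1 x hx).add
    (d _ 2 x hx)).add (d _ 3 x hx)).add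
    (d _ 4 x hx)).add (d _ 5 x hx)).add (d _ 6 x hx)).const_mul _)) ?_ ?_
  · simp [hy0, Gz, Dz]; norm_num
  intro x hx hneg
  have n := hnn x hx
  have b1 := barrier_one hy0 hnn hy hr x hx
  have hr0 := rhoz_nonneg hη n
  have hm := rhoz_mul hη (y x)
  rw [max_eq_left ((hD x hx).trans (le_max_right _ _)), max_eq_right (by linarith)] at hm
  rw [vfz1, vfz2, vfz3, vfz4, vfz5, vfz6]
  set r := rhoz η (y x)
  have n1 := n 1
  have n2 := n 2
  have n3 := n 3
  have n4 := n 4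
  have n5 := n 5
  have n6 := n 6
  set w1 := (-1) * y x 1 + 2 * y x 2 with hw1
  set w2 := (-2) * y x 2 + 3 * y x 3 with hw2
  set w3 := (-3) * y x 3 + 4 * y x 4 with hw3
  set w4 := (-4) * y x 4 + 5 * y x 5 with hw4
  set w5 := (-5) * y x 5 + 6 * y x 6 with hw5
  set w6 := (-6) * y x 6 with hw6
  have k1 : 1/1000 * Dz (y x) ≤
      (23/128 * w1 + 23/64 * w2 + 3/16 * w3 + (-1/2) * w4 + 5 * w5 + 6 * w6)
      - 1/1000 * (23/128 * w1 + 11/16 * w2 + 15/8 * w3 + 4 * w4 + 5 * w5 + 6 * w6) := by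
    unfold Gz Dz at hneg
    unfold Dz
    simp only [hw1, hw2, hw3, hw4, hw5, hw6]
    linarith
  have k2 := mul_le_mul_of_nonneg_left k1 hr0
  rw [hm] at k2
  unfold Az at k2
  linarith

/-- Eventually `y 1` dominates. -/
lemma final_ratio {η T : ℝ} (hT : 1 ≤ T) {y : ℝ → Fin 7 → ℝ}
    (hnn : ∀ x ∈ Set.Icc 0 T, ∀ i, 0 ≤ y x i)
    (hle : ∀ x ∈ Set.Icc 0 T, ∀ i, y x i ≤ 1)
    (hy : ∀ x ∈ Set.Icc 0 T, ∀ i, HasDerivAt (fun x => y x i) (vfz η (y x) i) x)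
    (hr : ∀ x ∈ Set.Icc 0 T, 1/1024 ≤ rhoz η (y x)) (h1 : alow ≤ y 1 1) :
    4 * y T 2 + 8 * y T 3 + 16 * y T 4 + 32 * y T 5 + 64 * y T 6
      ≤ 124 / alow * Real.exp ((-1/512) * (T - 1)) * y T 1 := by
  have hsub : ∀ x ∈ Set.Icc (1:ℝ) T, x ∈ Set.Icc 0 T := fun x hx => ⟨by linarith [hx.1], hx.2⟩
  have d := fun (c : ℝ) (i : Fin 7) x (hx : x ∈ Set.Icc 1 T) => (hy x (hsub x hx) i).const_mul c
  have hal := alow_pos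
  have := barrier_aux (f := fun x => 124 / alow * Real.exp ((-1/512) * (x - 1)) * y x 1 -
    (4 * y x 2 + 8 * y x 3 + 16 * y x 4 + 32 * y x 5 + 64 * y x 6)) (a := 1) (b := T)
    (fun x hx => (((((((hasDerivAt_id x).sub_const 1).const_mul (-1/512)).exp).const_mul
      (124 / alow)).mul
      (hy x (hsub x hx) 1)).sub (((((d 4 2 x hx).add (d 8 3 x hx)).add (d 16 4 x hx)).add
      (d 32 5 x hx)).add (d 64 6 x hx)))) ?_ ?_
  · linarith [this T ⟨hT, le_rfl⟩]
  · have m1 : (1:ℝ) ∈ Set.Icc 0 T := ⟨zero_le_one, hT⟩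
    have e := hle 1 m1
    have : 124 ≤ 124 / alow * y 1 1 := by
      calc (124:ℝ) = 124 / alow * alow := by field_simp
        _ ≤ _ := by gcongr
    simp only [sub_self, mul_zero, Real.exp_zero, mul_one]
    linarith [e 2, e 3, e 4, e 5, e 6]
  · intro x hx hneg
    have n := hnn x (hsub x hx)
    have hrx := hr x (hsub x hx)
    rw [vfz1, vfz2, vfz3, vfz4, vfz5, vfz6]
    simp only [id, mul_one]
    set r := rhoz η (y x)
    set C := 124 / alow * Real.exp ((-1/512) * (x - 1)) with hC
    have hC0 : 0 ≤ C := by positivity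
    have eC : 124 / alow * (Real.exp ((-1/512) * (x - 1)) * (-1/512)) = (-1/512) * C := by
      rw [hC]; ring
    rw [eC]
    have p2 : 0 ≤ (r - 1/1024) * y x 2 := mul_nonneg (by linarith) (n 2)
    have p3 : 0 ≤ (r - 1/1024) * y x 3 := mul_nonneg (by linarith) (n 3)
    have p4 : 0 ≤ (r - 1/1024) * y x 4 := mul_nonneg (by linarith) (n 4)
    have p5 : 0 ≤ (r - 1/1024) * y x 5 := mul_nonneg (by linarith) (n 5)
    have p6 : 0 ≤ (r - 1/1024) * y x 6 := mul_nonneg (by linarith) (n 6)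
    have pC : 0 ≤ C * (r * y x 2) := mul_nonneg hC0 (mul_nonneg (by linarith) (n 2))
    have pf : 0 ≤ (1/512 + 1/1024 + r) * ((4 * y x 2 + 8 * y x 3 + 16 * y x 4 + 32 * y x 5
      + 64 * y x 6) - C * y x 1) := mul_nonneg (by linarith) (by linarith)
    linarith [n 2, n 3, n 4, n 5, n 6]

theorem reduced_sol : ∃ (T : ℝ) (y : ℝ → Fin 7 → ℝ), 0 ≤ T ∧ y 0 = ![0, 0, 0, 0, 0, 0, 1] ∧
    (∀ x ∈ Set.Icc 0 T, 0 < Dz (y x) ∧ 1/1000 * Dz (y x) ≤ Gz (y x) ∧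
      ∀ i, HasDerivAt (fun x => y x i)
        (![(-4) * y x 0 + Az (y x) / Gz (y x) * y x 1,
          (-1/1024) * y x 1 + Az (y x) / Gz (y x) * ((-1) * y x 1 + 2 * y x 2),
          (-1/4) * y x 2 + Az (y x) / Gz (y x) * ((-2) * y x 2 + 3 * y x 3),
          (-1/16) * y x 3 + Az (y x) / Gz (y x) * ((-3) * y x 3 + 4 * y x 4),
          (-1/64) * y x 4 + Az (y x) / Gz (y x) * ((-4) * y x 4 + 5 * y x 5),
          (-1/256) * y x 5 + Az (y x) / Gz (y x) * ((-5) * y x 5 + 6 * y x 6),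
          (-1/1024) * y x 6 + Az (y x) / Gz (y x) * ((-6) * y x 6)] i) x) ∧
    11/16 * y T 2 + 2 * (15/8) * y T 3 + 3 * 4 * y T 4 + 4 * 5 * y T 5 + 5 * 6 * y T 6
      < 0.99999 * Dz (y T) := by
  have hal := alow_pos
  have hal1 := alow_le
  set C := 124 / alow with hC
  have hC1 : 1 ≤ C := by rw [hC, le_div_iff₀ hal]; linarith
  set T := 1 + 512 * Real.log (10 * C) with hTdef
  have hT : 1 ≤ T := by
    have := Real.log_nonneg (show 1 ≤ 10 * C by linarith)
    linarith
  have hexp : C * Real.exp ((-1/512) * (T - 1)) = 1/10 := by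
    have : (-1/512) * (T - 1) = - Real.log (10 * C) := by rw [hTdef]; ring
    rw [this, Real.exp_neg, Real.exp_log (by linarith)]
    field_simp
  set η := 1/1000 * Real.exp (-1501 * T) with hηdef
  have hη : 0 < η := by positivity
  obtain ⟨y, hy0, hnn, hle, hy⟩ := exists_sol hη (show 0 ≤ T by linarith)
  have h6 := six_lower hη hy0 hnn hy
  have hD6 : ∀ x ∈ Set.Icc 0 T, Real.exp (-1501 * T) ≤ Dz (y x) := by
    intro x hx
    have n := hnn x hx
    have h := h6 x hx
    have e : Real.exp (-1501 * T) ≤ Real.exp (-1501 * x) :=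
      Real.exp_le_exp.2 (by linarith [hx.2])
    unfold Dz
    linarith [n 1, n 2, n 3, n 4, n 5, n 6]
  have hD : ∀ x ∈ Set.Icc 0 T, η ≤ 1/1000 * Dz (y x) := by
    intro x hx
    have := hD6 x hx
    rw [hηdef]; linarith
  have hr : ∀ x ∈ Set.Icc 0 T, 1/1024 ≤ rhoz η (y x) := by
    intro x hx
    refine le_rhoz hη (hnn x hx) ?_
    have := hD x hx
    linarith
  have hG := barrier_two hη hy0 hnn hy hr hD
  have h11 := one_lower hη hT hy0 hnn hy hr
  have hfin := final_ratio hT hnn hle hy hr h11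
  refine ⟨T, y, by linarith, hy0, fun x hx => ⟨?_, by linarith [hG x hx], ?_⟩, ?_⟩
  · have := hD x hx
    linarith
  · have hrho : rhoz η (y x) = Az (y x) / Gz (y x) := by
      have g1 := hG x hx
      unfold rhoz
      rw [max_eq_left (show 1/1000 * Dz (y x) ≤ Gz (y x) by linarith),
        max_eq_left (by linarith [hD x hx])]
      ring
    rw [← hrho]
    exact hy x hx
  · have mT : T ∈ Set.Icc 0 T := ⟨by linarith, le_rfl⟩
    rw [← hC, hexp] at hfin
    have n := hnn T mT
    have p6 : 0 < y T 6 := lt_of_lt_of_le (Real.exp_pos _) (h6 T mT)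
    unfold Dz
    norm_num
    linarith [n 1, n 2, n 3, n 4, n 5]

/-! ## Back to the original system -/

/-- The two-parameter family obtained from the reduced system. -/
noncomputable def sig (z : Fin 7 → ℝ) : ℕ × ℕ → ℝ
  | (6, 4) => 1 * z 6
  | (5, 3) => 1 * z 5
  | (4, 3) => 1/4 * z 4
  | (4, 2) => 3/4 * z 4
  | (3, 3) => 1/16 * z 3
  | (3, 2) => 9/16 * z 3
  | (2, 3) => 1/64 * z 2
  | (2, 2) => 21/64 * z 2
  | (1, 3) => 1/256 * z 1
  | (1, 2) => 45/256 * z 1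
  | (0, 3) => 1/1024 * z 0
  | (0, 2) => 93/1024 * z 0
  | _ => 0

lemma sum_typeSet (f : ℕ × ℕ → ℝ) : ∑ s ∈ typeSet 6 4, f s =
    ∑ d ∈ Finset.range 7, (f (d, 2) + f (d, 3) + f (d, 4)) := by
  unfold typeSet
  rw [Finset.sum_product]
  refine Finset.sum_congr rfl fun d _ => ?_
  have : Finset.Icc 2 4 = ({2, 3, 4} : Finset ℕ) := by decide
  rw [this]
  simp [add_assoc]

lemma sum_D (z : Fin 7 → ℝ) : ∑ s ∈ typeSet 6 4, (s.1 : ℝ) * sig z s = Dz z := by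
  rw [sum_typeSet]
  simp [Finset.sum_range_succ, sig, Dz]
  ring

lemma sum_A (z : Fin 7 → ℝ) : ∑ s ∈ typeSet 6 4, tune s * sig z s * (s.1 : ℝ) = Az z := by
  rw [sum_typeSet]
  simp [Finset.sum_range_succ, sig, Az, tune]
  norm_num [zpow_neg]
  ring

lemma q_sig (z : Fin 7 → ℝ) (t : ℕ × ℕ) (ht : t ∈ typeSet 6 4) :
    q 6 4 t (sig z) = (t.1 : ℝ) * sig z t / Dz z := by
  unfold q
  rw [if_pos ht, sum_D]

lemma q_out (z : Fin 7 → ℝ) (t : ℕ × ℕ) (ht : t ∉ typeSet 6 4) :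
    q 6 4 t (sig z) = 0 := by
  unfold q
  rw [if_neg ht]

lemma q_eq (z : Fin 7 → ℝ) (d c : ℕ) :
    q 6 4 (d, c) (sig z) = if d ≤ 6 ∧ 2 ≤ c ∧ c ≤ 4 then (d : ℝ) * sig z (d, c) / Dz z else 0 := by
  have h : (d, c) ∈ typeSet 6 4 ↔ d ≤ 6 ∧ 2 ≤ c ∧ c ≤ 4 := by
    simp [typeSet, Nat.lt_succ_iff]
  by_cases hh : (d, c) ∈ typeSet 6 4
  · rw [q_sig z _ hh, if_pos (h.1 hh)]
  · rw [q_out z _ hh, if_neg (fun h' => hh (h.2 h'))]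

lemma g_sig (z : Fin 7 → ℝ) (hD : 0 < Dz z) : 1 - g 6 4 (sig z) = Gz z / Dz z := by
  have hD' := hD.ne'
  unfold g
  simp only [q_eq]
  simp [Finset.sum_range_succ, sig]
  field_simp
  unfold Dz Gz
  ring

lemma Fvec_sig (z : Fin 7 → ℝ) (t : ℕ × ℕ) (ht : t ∈ typeSet 6 4) :
    Fvec 6 4 t (sig z) = -(tune t * sig z t) + Az z * ΔB 6 4 t (sig z) := by
  unfold Fvec Δ
  rw [← sum_A, Finset.sum_mul]
  have : ∀ s ∈ typeSet 6 4, tune s * sig z s * (-(if s = t then 1 else 0) + (s.1 : ℝ) * ΔB 6 4 t (sig z))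
      = -(if s = t then tune s * sig z s else 0) + tune s * sig z s * (s.1 : ℝ) * ΔB 6 4 t (sig z) := by
    intro s _
    split_ifs <;> ring
  rw [Finset.sum_congr rfl this, Finset.sum_add_distrib, Finset.sum_neg_distrib,
    Finset.sum_ite_eq' , if_pos ht]

lemma Fvec_sig' (z : Fin 7 → ℝ) (hD : 0 < Dz z) (d c : ℕ) (ht : (d, c) ∈ typeSet 6 4) :
    Fvec 6 4 (d, c) (sig z) = -(tune (d, c) * sig z (d, c)) + Az z / Gz z *
      (-(d * sig z (d, c))
        + ((c + 1) / 4) * (if d + 1 ≤ 6 ∧ c + 1 ≤ 4 then (d + 1) * sig z (d + 1, c + 1) else 0)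
        + ((4 - c) / 4) * (if d + 1 ≤ 6 then (d + 1) * sig z (d + 1, c) else 0)) := by
  have hc : d ≤ 6 ∧ 2 ≤ c ∧ c ≤ 4 := by
    simpa [typeSet, Nat.lt_succ_iff] using ht
  rw [Fvec_sig z _ ht]
  unfold ΔB
  rw [g_sig z hD, q_eq, q_eq, q_eq]
  have hD' := hD.ne'
  have c1 : (2 ≤ c + 1) := by omega
  simp only [hc, c1, true_and, and_true, and_self, if_true, one_div_div]
  push_cast
  split_ifs <;> (field_simp; try ring)

theorem numerical_computation_T6 :
    ∃ (R : ℝ) (σ : ℝ → ℕ × ℕ → ℝ), 0 ≤ R ∧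
      σ 0 (6, 4) = 1 ∧
      (∀ t : ℕ × ℕ, t ≠ (6, 4) → σ 0 t = 0) ∧
      (∀ x ∈ Set.Icc (0 : ℝ) R, ∀ t ∈ typeSet 6 4,
        HasDerivAt (fun y => σ y t) (Fvec 6 4 t (σ x)) x) ∧
      (∀ x ∈ Set.Icc (0 : ℝ) R, g 6 4 (σ x) < 0.99999) ∧
      (∑ t ∈ typeSet 6 4, ((t.1 : ℝ) - 1) * q 6 4 t (σ R)) < 0.99999 := by
  obtain ⟨T, y, hT, hy0, hy, hfin⟩ := reduced_sol
  refine ⟨T, fun x => sig (y x), hT, ?_, ?_, ?_, ?_, ?_⟩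
  · simp [sig, hy0]
  · intro t ht
    change sig (y 0) t = 0
    rw [hy0]
    unfold sig
    split <;> simp_all
  · intro x hx t ht
    obtain ⟨hD, hG, hd⟩ := hy x hx
    have d0 := hd 0
    have d1 := hd 1
    have d2 := hd 2
    have d3 := hd 3
    have d4 := hd 4
    have d5 := hd 5
    have d6 := hd 6
    simp only [Matrix.cons_val] at d0 d1 d2 d3 d4 d5 d6
    obtain ⟨d, c⟩ := t
    rw [Fvec_sig' _ hD d c ht]
    have hc : d ≤ 6 ∧ 2 ≤ c ∧ c ≤ 4 := by
      simpa [typeSet, Nat.lt_succ_iff] using ht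
    obtain ⟨hd6, hc2, hc4⟩ := hc
    clear ht hd
    generalize Az (y x) / Gz (y x) = r at *
    interval_cases d <;> interval_cases c <;> norm_num [sig, tune, zpow_neg]
    all_goals first
      | exact hasDerivAt_const _ _
      | (refine HasDerivAt.congr_deriv (d0.const_mul _) ?_; ring)
      | (refine HasDerivAt.congr_deriv (d1.const_mul _) ?_; ring)
      | (refine HasDerivAt.congr_deriv (d2.const_mul _) ?_; ring)
      | (refine HasDerivAt.congr_deriv (d3.const_mul _) ?_; ring)
      | (refine HasDerivAt.congr_deriv (d4.const_mul _) ?_; ring)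
      | (refine HasDerivAt.congr_deriv d5 ?_; ring)
      | (refine HasDerivAt.congr_deriv d6 ?_; ring)
  · intro x hx
    obtain ⟨hD, hG, _⟩ := hy x hx
    have h := g_sig (y x) hD
    have h2 : 1/1000 ≤ Gz (y x) / Dz (y x) := by rwa [le_div_iff₀ hD]
    norm_num
    linarith
  · obtain ⟨hD, _, _⟩ := hy T ⟨hT, le_rfl⟩
    have e : ∑ t ∈ typeSet 6 4, ((t.1 : ℝ) - 1) * q 6 4 t (sig (y T)) =
        (11/16 * y T 2 + 2 * (15/8) * y T 3 + 3 * 4 * y T 4 + 4 * 5 * y T 5 + 5 * 6 * y T 6)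
          / Dz (y T) := by
      rw [sum_typeSet]
      simp only [q_eq]
      simp [Finset.sum_range_succ, sig]
      field_simp
      ring
    simp only [e]
    rw [div_lt_iff₀ hD]
    exact hfin
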